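/- arXiv:1309.2903 — 7 statements merged into one kernel-verified Lean document; each statement's English description precedes it below -/
import Mathlib

section
/- Let X be an Archimedean ordered vector space. Let (x_τ)_{τ∈T} be a decreasing net in X (T a directed set, the map antitone) that is bounded below by some d ∈ X, and let L = {y ∈ X : y ≤ x_τ for all τ ∈ T} be the set of all lower bounds of the net. Then the infimum of the set {x_τ − y : τ ∈ T, y ∈ L} exists and equals 0. -/
/-- In an Archimedean ordered vector space, for any decreasing net
`x : T → X` over a (nonempty) directed set `T` that is bounded below by `d`,
the infimum of `{x_τ - y : τ ∈ T, y a lower bound of the net}` exists and equals `0`. -/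
theorem archimedean_inf_net_sub_lowerBounds_eq_zero
    {X : Type*} [AddCommGroup X] [PartialOrder X] [IsOrderedAddMonoid X] [Module ℝ X] [PosSMulMono ℝ X]
    (hArch : ∀ x y : X, 0 ≤ x → (∀ n : ℕ, 1 ≤ n → n • y ≤ x) → y ≤ 0)
    {T : Type*} [Preorder T] [Nonempty T]
    (hdir : ∀ a b : T, ∃ c : T, a ≤ c ∧ b ≤ c)
    (x : T → X) (hx : Antitone x)
    (d : X) (hd : ∀ τ : T, d ≤ x τ) :
    IsGLB {z : X | ∃ τ : T, ∃ y : X, (∀ σ : T, y ≤ x σ) ∧ z = x τ - y} 0 := by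
  constructor
  · rintro z ⟨τ, y, hy, rfl⟩
    exact sub_nonneg.mpr (hy τ)
  · intro b hb
    have key : ∀ n : ℕ, ∀ σ : T, n • b + d ≤ x σ := by
      intro n
      induction n with
      | zero => intro σ; simpa using hd σ
      | succ k ih =>
        intro σ
        have h : b ≤ x σ - (k • b + d) := hb ⟨σ, k • b + d, ih, rfl⟩
        have h2 := le_sub_iff_add_le.mp h
        have e : (k + 1) • b + d = b + (k • b + d) := by
          rw [succ_nsmul]; abel
        rw [e]; exact h2
    obtain ⟨τ⟩ := ‹Nonempty T›
    exact hArch (x τ - d) b (sub_nonneg.mpr (hd τ))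
      (fun n _ => le_sub_iff_add_le.mpr (key n τ))
end

section
/- Let X be an almost Archimedean ordered vector space, let Y be an ordered vector space, and let T : Y₊ → X₊ be an additive mapping (T(u + v) = T(u) + T(v) for all u, v ∈ Y₊). Then there exists a linear operator S : Y → X such that S(u) = T(u) for every u ∈ Y₊. -/
/-- If `X` is an almost Archimedean ordered vector space, `Y` is an ordered
vector space, and `T` maps the positive cone of `Y` additively into the positive cone of
`X`, then `T` extends to a linear operator `S : Y → X`. -/
theorem exists_linear_extension_of_additive_on_cone
    {X : Type*} [AddCommGroup X] [PartialOrder X] [IsOrderedAddMonoid X] [Module ℝ X] [PosSMulMono ℝ X]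
    {Y : Type*} [AddCommGroup Y] [PartialOrder Y] [IsOrderedAddMonoid Y] [Module ℝ Y] [PosSMulMono ℝ Y]
    (hAA : ∀ x y : X, 0 ≤ x → (∀ n : ℤ, n • y ≤ x) → y = 0)
    (T : Y → X)
    (hTpos : ∀ u : Y, 0 ≤ u → 0 ≤ T u)
    (hTadd : ∀ u v : Y, 0 ≤ u → 0 ≤ v → T (u + v) = T u + T v) :
    ∃ S : Y →ₗ[ℝ] X, ∀ u : Y, 0 ≤ u → S u = T u := by
  have hT0 : T 0 = 0 := by
    have h := hTadd 0 0 le_rfl le_rfl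
    simpa using h
  have hmono : ∀ u v : Y, 0 ≤ u → u ≤ v → T u ≤ T v := by
    intro u v hu huv
    have h := hTadd u (v - u) hu (sub_nonneg.2 huv)
    rw [add_sub_cancel] at h
    rw [h]
    exact le_add_of_nonneg_right (hTpos _ (sub_nonneg.2 huv))
  have hsm : ∀ {r : ℝ} {u : Y}, 0 ≤ r → 0 ≤ u → 0 ≤ r • u := fun hr hu => smul_nonneg hr hu
  have hnat : ∀ (n : ℕ) (u : Y), 0 ≤ u → T ((n : ℝ) • u) = (n : ℝ) • T u := by
    intro n u hu
    induction n with
    | zero => simp [hT0]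
    | succ k ih =>
      push_cast
      rw [add_smul, add_smul, one_smul, one_smul, hTadd _ _ (hsm k.cast_nonneg hu) hu, ih]
  have hXm : ∀ {a b : ℝ} {x : X}, a ≤ b → 0 ≤ x → a • x ≤ b • x := by
    intro a b x hab hx
    rw [← sub_nonneg, ← sub_smul]
    exact smul_nonneg (sub_nonneg.2 hab) hx
  have hYm : ∀ {a b : ℝ} {x : Y}, a ≤ b → 0 ≤ x → a • x ≤ b • x := by
    intro a b x hab hx
    rw [← sub_nonneg, ← sub_smul]
    exact smul_nonneg (sub_nonneg.2 hab) hx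
  have hhom : ∀ (r : ℝ) (u : Y), 0 ≤ r → 0 ≤ u → T (r • u) = r • T u := by
    intro r u hr hu
    have key : ∀ n : ℕ, (n : ℝ) • (T (r • u) - r • T u) ≤ T u ∧
        -((n : ℝ) • (T (r • u) - r • T u)) ≤ T u := by
      intro n
      have hnr : 0 ≤ (n : ℝ) * r := mul_nonneg n.cast_nonneg hr
      have h1 : ((⌊(n : ℝ) * r⌋₊ : ℕ) : ℝ) ≤ n * r := Nat.floor_le hnr
      have h2 : (n : ℝ) * r ≤ ((⌊(n : ℝ) * r⌋₊ + 1 : ℕ) : ℝ) := by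
        push_cast; exact (Nat.lt_floor_add_one _).le
      generalize ⌊(n : ℝ) * r⌋₊ = k at h1 h2
      have e : T (((n : ℝ) * r) • u) = (n : ℝ) • T (r • u) := by
        rw [mul_smul, hnat n _ (hsm hr hu)]
      have a1 := hmono _ _ (hsm k.cast_nonneg hu) (hYm h1 hu)
      have a2 := hmono _ _ (hsm hnr hu) (hYm h2 hu)
      rw [e, hnat _ _ hu] at a1 a2
      have b1 := hXm h1 (hTpos u hu)
      have b2 := hXm h2 (hTpos u hu)
      have c : ((k + 1 : ℕ) : ℝ) • T u = T u + (k : ℝ) • T u := by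
        push_cast; rw [add_smul, one_smul, add_comm]
      rw [c] at a2 b2
      rw [smul_sub, neg_sub, ← mul_smul]
      exact ⟨sub_le_iff_le_add.2 (a2.trans (add_le_add_right b1 _)),
        sub_le_iff_le_add.2 (b2.trans (add_le_add_right a1 _))⟩
    refine sub_eq_zero.1 (hAA (T u) _ (hTpos u hu) ?_)
    intro n
    obtain ⟨m, rfl | rfl⟩ := n.eq_nat_or_neg
    · have := (key m).1
      rwa [Nat.cast_smul_eq_nsmul, ← natCast_zsmul] at this
    · have := (key m).2
      rwa [Nat.cast_smul_eq_nsmul, ← natCast_zsmul, ← neg_zsmul] at this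
  have hwd : ∀ u v u' v' : Y, 0 ≤ u → 0 ≤ v → 0 ≤ u' → 0 ≤ v' → u - v = u' - v' →
      T u - T v = T u' - T v' := by
    intro u v u' v' hu hv hu' hv' h
    rw [sub_eq_sub_iff_add_eq_add] at h ⊢
    rw [← hTadd _ _ hu hv', ← hTadd _ _ hu' hv, h]
  let W : Submodule ℝ Y :=
    { carrier := {y | ∃ u v : Y, 0 ≤ u ∧ 0 ≤ v ∧ y = u - v}
      zero_mem' := ⟨0, 0, le_rfl, le_rfl, by simp⟩
      add_mem' := by
        rintro _ _ ⟨u, v, hu, hv, rfl⟩ ⟨u', v', hu', hv', rfl⟩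
        exact ⟨u + u', v + v', add_nonneg hu hu', add_nonneg hv hv', by abel⟩
      smul_mem' := by
        rintro r _ ⟨u, v, hu, hv, rfl⟩
        rcases le_total 0 r with hr | hr
        · exact ⟨r • u, r • v, hsm hr hu, hsm hr hv, smul_sub _ _ _⟩
        · exact ⟨(-r) • v, (-r) • u, hsm (neg_nonneg.2 hr) hv, hsm (neg_nonneg.2 hr) hu, by
            rw [← smul_sub, neg_smul, ← smul_neg, neg_sub]⟩ }
  have hW : ∀ y : W, ∃ u v : Y, 0 ≤ u ∧ 0 ≤ v ∧ (y : Y) = u - v := fun y => y.2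
  choose p q hp hq hpq using hW
  have hval : ∀ (y : W) (u v : Y), 0 ≤ u → 0 ≤ v → (y : Y) = u - v →
      T (p y) - T (q y) = T u - T v := fun y u v hu hv h =>
    hwd _ _ _ _ (hp y) (hq y) hu hv ((hpq y).symm.trans h)
  let f : W →ₗ[ℝ] X :=
    { toFun := fun y => T (p y) - T (q y)
      map_add' := by
        intro y z
        rw [hval (y + z) (p y + p z) (q y + q z) (add_nonneg (hp y) (hp z))
          (add_nonneg (hq y) (hq z)) (by rw [Submodule.coe_add, hpq y, hpq z]; abel),
          hTadd _ _ (hp y) (hp z), hTadd _ _ (hq y) (hq z)]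
        abel
      map_smul' := by
        intro r y
        rw [RingHom.id_apply]
        rcases le_total 0 r with hr | hr
        · rw [hval (r • y) (r • p y) (r • q y) (hsm hr (hp y)) (hsm hr (hq y))
            (by rw [Submodule.coe_smul, ← smul_sub, ← hpq y]), hhom _ _ hr (hp y),
            hhom _ _ hr (hq y), smul_sub]
        · have hr' := neg_nonneg.2 hr
          rw [hval (r • y) ((-r) • q y) ((-r) • p y) (hsm hr' (hq y)) (hsm hr' (hp y))
            (by rw [Submodule.coe_smul, ← smul_sub, neg_smul, ← smul_neg, neg_sub, ← hpq y]),
            hhom _ _ hr' (hp y),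
            hhom _ _ hr' (hq y), ← smul_sub, neg_smul, ← smul_neg, neg_sub] }
  obtain ⟨S, hS⟩ := LinearMap.exists_extend f
  refine ⟨S, fun u hu => ?_⟩
  have hu' : u ∈ W := ⟨u, 0, hu, le_rfl, by simp⟩
  have h1 : S u = f ⟨u, hu'⟩ := by rw [← hS]; rfl
  rw [h1]
  have h2 := hval ⟨u, hu'⟩ u 0 hu le_rfl (by simp)
  rw [hT0, sub_zero] at h2
  exact h2
end

section
/- Let X be an ordered vector space such that every additive mapping T : ℝ₊ → X₊ (where ℝ₊ = [0,∞) and T(a + b) = T(a) + T(b) for all a, b ≥ 0) admits an extension to a linear mapping S : ℝ → X with S(a) = T(a) for all a ≥ 0. Then X is almost Archimedean. -/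
/-- If every additive map `T : ℝ₊ → X₊` extends to a linear map `S : ℝ → X`,
then the ordered vector space `X` is almost Archimedean. -/
theorem almostArchimedean_of_extension_property
    {X : Type*} [AddCommGroup X] [PartialOrder X] [IsOrderedAddMonoid X] [Module ℝ X] [PosSMulMono ℝ X]
    (h : ∀ T : ℝ → X, (∀ a : ℝ, 0 ≤ a → 0 ≤ T a) →
      (∀ a b : ℝ, 0 ≤ a → 0 ≤ b → T (a + b) = T a + T b) →
      ∃ S : ℝ →ₗ[ℝ] X, ∀ a : ℝ, 0 ≤ a → S a = T a) :
    ∀ x y : X, 0 ≤ x → (∀ n : ℤ, n • y ≤ x) → y = 0 := by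
  intro x y hx hy
  have hr : ∀ t : ℝ, t • y ≤ x := by
    intro t
    have e : t • y = (1 - Int.fract t) • (⌊t⌋ • y) + Int.fract t • ((⌊t⌋ + 1) • y) := by
      rw [← Int.cast_smul_eq_zsmul ℝ, ← Int.cast_smul_eq_zsmul ℝ, smul_smul, smul_smul,
        ← add_smul]
      congr 1
      have := Int.floor_add_fract t
      push_cast
      linarith
    have e2 : x = (1 - Int.fract t) • x + Int.fract t • x := by
      rw [← add_smul]; simp
    rw [e, e2]
    have h1 : 0 ≤ 1 - Int.fract t := by linarith [Int.fract_lt_one t]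
    exact add_le_add (smul_le_smul_of_nonneg_left (hy _) h1)
      (smul_le_smul_of_nonneg_left (hy _) (Int.fract_nonneg t))
  obtain ⟨g, hg⟩ := LinearMap.exists_leftInverse_of_injective (Algebra.linearMap ℚ ℝ)
    (LinearMap.ker_eq_bot.2 (algebraMap ℚ ℝ).injective)
  have hg1 : g 1 = 1 := by
    have := LinearMap.congr_fun hg 1
    simpa using this
  obtain ⟨S, hS⟩ := h (fun a => a • x + ((g a : ℚ) : ℝ) • y) (by
    intro a ha
    rcases ha.eq_or_lt with rfl | ha
    · simp
    · have h2 := smul_le_smul_of_nonneg_left (hr (-((g a : ℚ) : ℝ) / a)) ha.le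
      rw [smul_smul, mul_div_cancel₀ _ ha.ne', neg_smul] at h2
      have := add_le_add_left h2 (((g a : ℚ) : ℝ) • y)
      simpa using this) (by
    intro a b _ _
    simp only [map_add, Rat.cast_add, add_smul]
    abel)
  have s1 := hS 1 zero_le_one
  have s2 := hS (√2) (Real.sqrt_nonneg 2)
  have s3 : S (√2) = √2 • S 1 := by rw [← map_smul]; simp
  rw [s3, s1] at s2
  simp only [hg1, one_smul, Rat.cast_one, smul_add, add_right_inj] at s2
  have s4 : (√2 - ((g √2 : ℚ) : ℝ)) • y = 0 := by rw [sub_smul, s2, sub_self]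
  rcases smul_eq_zero.1 s4 with h5 | h5
  · exact absurd ⟨g √2, (sub_eq_zero.1 h5).symm⟩ irrational_sqrt_two
  · exact h5
end

section
/- Let X be an ordered vector space and Y ⊆ X an order ideal (a vector subspace that is order convex: a, b ∈ Y and a ≤ z ≤ b imply z ∈ Y). If the quotient space X/Y, ordered by declaring [f] ≤ [g] whenever g − f + q ∈ X₊ for some q ∈ Y, is almost Archimedean, then Y is uniformly closed in X. -/
/-- If `Y` is an order ideal (an order convex vector subspace) of an ordered
vector space `X` and the quotient `X/Y` — ordered by `[f] ≤ [g]` iff `g - f + q ∈ X₊` for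
some `q ∈ Y` — is almost Archimedean, then `Y` is uniformly closed in `X`.
The almost Archimedean property of `X/Y` is expressed via representatives:
`0 ≤ [x]` iff `∃ q ∈ Y, 0 ≤ x + q`; `n • [y] ≤ [x]` iff `∃ q ∈ Y, 0 ≤ x - n • y + q`;
`[y] = 0` iff `y ∈ Y`. -/
theorem uniformlyClosed_of_quotient_almostArchimedean
    {X : Type*} [AddCommGroup X] [PartialOrder X] [IsOrderedAddMonoid X] [Module ℝ X] [PosSMulMono ℝ X]
    (Y : Submodule ℝ X)
    (hconv : ∀ a b z : X, a ∈ Y → b ∈ Y → a ≤ z → z ≤ b → z ∈ Y)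
    (hAA : ∀ x y : X, (∃ q ∈ Y, 0 ≤ x + q) →
      (∀ n : ℤ, ∃ q ∈ Y, 0 ≤ x - n • y + q) → y ∈ Y) :
    ∀ u : X, 0 ≤ u → ∀ yseq : ℕ → X, (∀ n, yseq n ∈ Y) →
      ∀ (x : X) (ε : ℕ → ℝ), Antitone ε → Filter.Tendsto ε Filter.atTop (nhds 0) →
      (∀ n : ℕ, yseq n - x ∈ Set.Icc (-(ε n • u)) (ε n • u)) → x ∈ Y := by
  intro u hu yseq hy x ε _ hlim hmem
  refine hAA u x ⟨0, Y.zero_mem, by simpa using hu⟩ ?_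
  intro k
  have ht : Filter.Tendsto (fun n => |(k : ℝ)| * |ε n|) Filter.atTop (nhds 0) := by
    simpa using (hlim.abs).const_mul |(k : ℝ)|
  obtain ⟨n, hn⟩ := (ht.eventually (gt_mem_nhds (zero_lt_one))).exists
  rw [← abs_mul] at hn
  obtain ⟨hn1, hn2⟩ := abs_lt.mp hn
  obtain ⟨h1, h2⟩ := hmem n
  refine ⟨(k : ℝ) • yseq n, Y.smul_mem _ (hy n), ?_⟩
  rw [← Int.cast_smul_eq_zsmul ℝ k x]
  rcases le_total 0 (k : ℝ) with hk | hk
  · have e1 : 0 ≤ (k : ℝ) • ((yseq n - x) + ε n • u) :=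
      smul_nonneg hk (by simpa using add_le_add_left h1 (ε n • u))
    have e2 : 0 ≤ (1 - (k : ℝ) * ε n) • u := smul_nonneg (by linarith) hu
    have e3 := add_nonneg e1 e2
    have : (k : ℝ) • ((yseq n - x) + ε n • u) + (1 - (k : ℝ) * ε n) • u
        = u - (k : ℝ) • x + (k : ℝ) • yseq n := by module
    rwa [this] at e3
  · have e1 : 0 ≤ (-(k : ℝ)) • (ε n • u - (yseq n - x)) :=
      smul_nonneg (by linarith) (sub_nonneg.mpr h2)
    have e2 : 0 ≤ (1 + (k : ℝ) * ε n) • u := smul_nonneg (by linarith) hu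
    have e3 := add_nonneg e1 e2
    have : (-(k : ℝ)) • (ε n • u - (yseq n - x)) + (1 + (k : ℝ) * ε n) • u
        = u - (k : ℝ) • x + (k : ℝ) • yseq n := by module
    rwa [this] at e3
end

section
/- Let Γ be a set with at least two elements and let Y be the real vector space of all bounded real-valued functions on Γ, ordered by: f ≤ g if and only if either f = g or inf_{t∈Γ} (g(t) − f(t)) > 0. Then Y is an almost Archimedean ordered vector space: if f, h ∈ Y with n·h ≤ f for all integers n, then h = 0. -/
/-- The order on the space of bounded real functions on `Γ`:
`f ≤ g` iff `f = g` or `inf_{t ∈ Γ} (g t - f t) > 0`. -/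
def strongLe {Γ : Type*} (f g : Γ → ℝ) : Prop :=
  f = g ∨ 0 < ⨅ t : Γ, (g t - f t)

/-- Let `Γ` have at least two elements and order the bounded real functions
on `Γ` by `f ≤ g` iff `f = g` or `inf_t (g t - f t) > 0`. This space is almost
Archimedean: if `f, h` are bounded and `n • h ≤ f` for all integers `n`, then `h = 0`. -/
theorem strongLe_almostArchimedean
    {Γ : Type*} (hΓ : ∃ a b : Γ, a ≠ b)
    (f h : Γ → ℝ)
    (hf : ∃ C : ℝ, ∀ t : Γ, |f t| ≤ C)
    (hh : ∃ C : ℝ, ∀ t : Γ, |h t| ≤ C)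
    (hle : ∀ n : ℤ, strongLe ((n : ℝ) • h) f) :
    h = 0 := by
  have key : ∀ (n : ℤ) (t : Γ), (n : ℝ) * h t ≤ f t := by
    intro n t
    rcases hle n with e | e
    · have := congrFun e t
      simp only [Pi.smul_apply, smul_eq_mul] at this
      exact this.le
    · have hb : BddBelow (Set.range fun t : Γ => f t - ((n : ℝ) • h) t) := by
        by_contra hb
        rw [Real.iInf_of_not_bddBelow hb] at e
        exact lt_irrefl _ e
      have := ciInf_le hb t
      simp only [Pi.smul_apply, smul_eq_mul] at this e
      linarith
  funext t
  by_contra hne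
  have hne' : h t ≠ 0 := hne
  obtain ⟨n, hn⟩ := exists_nat_gt (f t / |h t|)
  have hpos : 0 < |h t| := abs_pos.mpr hne'
  rw [div_lt_iff₀ hpos] at hn
  have h1 := key n t
  have h2 := key (-n) t
  push_cast at h1 h2
  rcases abs_cases (h t) with ⟨h3, _⟩ | ⟨h3, _⟩ <;> rw [h3] at hn <;> linarith
end

section
/- Let Γ be a set with at least two elements and let Y be the real vector space of all bounded real-valued functions on Γ, ordered by: f ≤ g if and only if either f = g or inf_{t∈Γ} (g(t) − f(t)) > 0. Then Y is not Archimedean; in fact, for every f ∈ Y with 0 ≤ f and f ≠ 0, the set {(1/n)·f : n ∈ ℕ, n ≥ 1} has no infimum in Y. -/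
theorem strongLe_iff_aux {Γ : Type*} [Nonempty Γ] (f g : Γ → ℝ) :
    strongLe f g ↔ f = g ∨ ∃ e : ℝ, 0 < e ∧ ∀ t, e ≤ g t - f t := by
  unfold strongLe
  refine or_congr Iff.rfl ⟨fun h => ⟨_, h, fun t => ?_⟩, ?_⟩
  · have hb : BddBelow (Set.range fun t => g t - f t) := by
      by_contra hb
      have := Real.iInf_of_not_bddBelow hb
      rw [this] at h
      exact lt_irrefl _ h
    exact ciInf_le hb t
  · rintro ⟨e, he, h⟩
    exact lt_of_lt_of_le he (le_ciInf h)

theorem strongLe_single_aux {Γ : Type*} (hΓ : ∃ a b : Γ, a ≠ b) :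
    ∃ y : Γ → ℝ, (∃ C : ℝ, ∀ t : Γ, |y t| ≤ C) ∧ (∀ t, y t ≤ 0) ∧ ¬ strongLe y 0 := by
  classical
  obtain ⟨a, b, hab⟩ := hΓ
  haveI : Nonempty Γ := ⟨a⟩
  refine ⟨fun t => if t = a then -1 else 0, ⟨1, fun t => ?_⟩, fun t => ?_, ?_⟩
  · dsimp only
    split_ifs <;> simp
  · dsimp only
    split_ifs <;> simp
  · rw [strongLe_iff_aux]
    rintro (h | ⟨e, he, h⟩)
    · have := congrFun h a
      norm_num at this
    · have := h b
      simp [hab.symm] at this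
      linarith

/-- Let `Γ` have at least two elements and order the bounded real functions
on `Γ` by `f ≤ g` iff `f = g` or `inf_t (g t - f t) > 0`. This space is not Archimedean;
in fact, for every bounded `f` with `0 ≤ f` and `f ≠ 0`, the set
`{(1/n) • f : n ∈ ℕ, n ≥ 1}` has no infimum among the bounded functions. -/
theorem strongLe_not_archimedean
    {Γ : Type*} (hΓ : ∃ a b : Γ, a ≠ b) :
    (¬ ∀ f y : Γ → ℝ, (∃ C : ℝ, ∀ t : Γ, |f t| ≤ C) → (∃ C : ℝ, ∀ t : Γ, |y t| ≤ C) →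
        strongLe 0 f → (∀ n : ℕ, 1 ≤ n → strongLe ((n : ℝ) • y) f) → strongLe y 0) ∧
    (∀ f : Γ → ℝ, (∃ C : ℝ, ∀ t : Γ, |f t| ≤ C) → strongLe 0 f → f ≠ 0 →
      ¬ ∃ g : Γ → ℝ, (∃ C : ℝ, ∀ t : Γ, |g t| ≤ C) ∧
        (∀ n : ℕ, 1 ≤ n → strongLe g ((n : ℝ)⁻¹ • f)) ∧
        (∀ w : Γ → ℝ, (∃ C : ℝ, ∀ t : Γ, |w t| ≤ C) →
          (∀ n : ℕ, 1 ≤ n → strongLe w ((n : ℝ)⁻¹ • f)) → strongLe w g)) := by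
  obtain ⟨y, hyb, hy0, hy⟩ := strongLe_single_aux hΓ
  obtain ⟨a, -⟩ := hΓ
  haveI : Nonempty Γ := ⟨a⟩
  constructor
  · intro H
    refine hy (H (fun _ => 1) y ⟨1, fun t => by simp⟩ hyb ?_ ?_)
    · rw [strongLe_iff_aux]
      exact Or.inr ⟨1, one_pos, fun t => by simp⟩
    · intro n _
      rw [strongLe_iff_aux]
      refine Or.inr ⟨1, one_pos, fun t => ?_⟩
      have : (n : ℝ) * y t ≤ 0 := mul_nonpos_of_nonneg_of_nonpos n.cast_nonneg (hy0 t)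
      simp only [Pi.smul_apply, smul_eq_mul]
      linarith
  · rintro f - hf hf0 ⟨g, -, hg, hw⟩
    rw [strongLe_iff_aux] at hf
    rcases hf with hf | ⟨e, he, hf⟩
    · exact hf0 hf.symm
    have key : ∀ w : Γ → ℝ, (∀ t, w t ≤ 0) →
        ∀ n : ℕ, 1 ≤ n → strongLe w ((n : ℝ)⁻¹ • f) := by
      intro w hw n hn
      have hn' : (0 : ℝ) < (n : ℝ)⁻¹ := inv_pos.2 (by exact_mod_cast hn)
      rw [strongLe_iff_aux]
      refine Or.inr ⟨(n : ℝ)⁻¹ * e, mul_pos hn' he, fun t => ?_⟩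
      have h1 := hf t
      simp only [Pi.zero_apply, sub_zero] at h1
      have h2 := mul_le_mul_of_nonneg_left h1 hn'.le
      have h3 := hw t
      simp only [Pi.smul_apply, smul_eq_mul]
      linarith
    have hg0 : ∀ t, g t ≤ 0 := by
      intro t
      have hlim : Filter.Tendsto (fun n : ℕ => (n : ℝ)⁻¹ * f t) Filter.atTop (nhds 0) := by
        simpa using (tendsto_inv_atTop_nhds_zero_nat (𝕜 := ℝ)).mul_const (f t)
      refine ge_of_tendsto hlim ?_
      filter_upwards [Filter.eventually_ge_atTop 1] with n hn
      have h := hg n hn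
      rw [strongLe_iff_aux] at h
      rcases h with h | ⟨d, hd, h⟩
      · rw [h]; simp
      · have := h t
        simp only [Pi.smul_apply, smul_eq_mul] at this
        linarith
    have h0 := hw 0 ⟨0, fun t => by simp⟩ (key 0 fun t => le_rfl)
    rw [strongLe_iff_aux] at h0
    rcases h0 with h0 | ⟨d, hd, h0⟩
    · have := hw y hyb (key y hy0)
      rw [← h0] at this
      exact hy this
    · have h1 := h0 a
      have h2 := hg0 a
      simp only [Pi.zero_apply, sub_zero] at h1
      linarith
end

section
/- Let X be an ordered vector space, x ∈ X₊, and y ∈ X with −(1/n)·x ≤ y ≤ (1/n)·x for all natural numbers n ≥ 1. Let f : ℝ → ℝ be an additive (ℚ-linear) function. Then the mapping T : ℝ₊ → X defined by T(a) = a·x + f(a)·y is additive and maps ℝ₊ into X₊, i.e., 0 ≤ T(a) for every real a ≥ 0. -/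
/-- Let `X` be an ordered vector space, `x ∈ X₊`, and `y ∈ X` with
`-(1/n) • x ≤ y ≤ (1/n) • x` for all `n ≥ 1`. If `f : ℝ → ℝ` is additive, then the map
`T : ℝ₊ → X`, `T a = a • x + f a • y`, is additive and takes values in `X₊`. -/
theorem additive_pos_map_of_small_y
    {X : Type*} [AddCommGroup X] [PartialOrder X] [IsOrderedAddMonoid X] [Module ℝ X] [PosSMulMono ℝ X]
    (x y : X) (hx : 0 ≤ x)
    (hy : ∀ n : ℕ, 1 ≤ n → -((n : ℝ)⁻¹ • x) ≤ y ∧ y ≤ (n : ℝ)⁻¹ • x)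
    (f : ℝ → ℝ) (hf : ∀ a b : ℝ, f (a + b) = f a + f b) :
    (∀ a b : ℝ, 0 ≤ a → 0 ≤ b →
      (a + b) • x + f (a + b) • y = (a • x + f a • y) + (b • x + f b • y)) ∧
    (∀ a : ℝ, 0 ≤ a → 0 ≤ a • x + f a • y) := by
  refine ⟨fun a b _ _ => by rw [hf]; module, fun a ha => ?_⟩
  rcases ha.eq_or_lt with rfl | ha
  · have h0 : f 0 = 0 := by
      have := hf 0 0
      rw [add_zero] at this
      linarith
    simp [h0]
  obtain ⟨n, hn⟩ := exists_nat_ge (|f a| / a)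
  have hpos : (0 : ℝ) < ((n + 1 : ℕ) : ℝ) := by positivity
  have hle : |f a| * ((n + 1 : ℕ) : ℝ)⁻¹ ≤ a := by
    rw [← div_eq_mul_inv, div_le_iff₀ hpos]
    rw [div_le_iff₀ ha] at hn
    push_cast
    nlinarith
  obtain ⟨h1, h2⟩ := hy (n + 1) (by omega)
  generalize ((n + 1 : ℕ) : ℝ)⁻¹ = r at *
  have e1 : 0 ≤ (a - |f a| * r) • x := smul_nonneg (sub_nonneg.2 hle) hx
  rcases le_total 0 (f a) with h | h
  · rw [abs_of_nonneg h] at e1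
    have e2 : 0 ≤ f a • (y - -(r • x)) := smul_nonneg h (sub_nonneg.2 h1)
    convert add_nonneg e1 e2 using 1
    module
  · rw [abs_of_nonpos h] at e1
    have e2 : 0 ≤ (-f a) • (r • x - y) := smul_nonneg (neg_nonneg.2 h) (sub_nonneg.2 h2)
    convert add_nonneg e1 e2 using 1
    module
end
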